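/- Let R be a commutative Noetherian local ring whose maximal ideal m satisfies m² = 0. Then for every finitely generated R-module M, ca_R^2(M) = ca_R(M). -/

import Mathlib

open CategoryTheory

noncomputable section

universe u

variable (R : Type u) [CommRing R]

/-- The `n`-th Ext group of two `R`-modules, as an `R`-module. -/
abbrev ExtM (n : ℕ) (M N : ModuleCat.{u} R) : ModuleCat.{u} R :=
  ((Ext R (ModuleCat.{u} R) n).obj (Opposite.op M)).obj N

/-- The `n`-th cohomological annihilator of a module `M`:
elements `r` with `r • Ext^i(M, N) = 0` for all `i ≥ n` and all finitely generated `N`. -/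
def caN (n : ℕ) (M : ModuleCat.{u} R) : Ideal R where
  carrier := {r | ∀ i, n ≤ i → ∀ N : ModuleCat.{u} R, Module.Finite R N →
    ∀ x : ExtM R i M N, r • x = 0}
  zero_mem' := by intro i _ N _ x; simp
  add_mem' := by
    intro a b ha hb i hi N hN x
    rw [add_smul, ha i hi N hN x, hb i hi N hN x, add_zero]
  smul_mem' := by
    intro c r hr i hi N hN x
    simp only [smul_eq_mul, mul_smul, hr i hi N hN x, smul_zero]

/-- The cohomological annihilator `ca_R(M) = ⋃ₙ ca_R^n(M)`. -/
def ca (M : ModuleCat.{u} R) : Set R := ⋃ n : ℕ, (caN R n M : Set R)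

/-- The `n`-th co-cohomological annihilator of a module `M`. -/
def cocaN (n : ℕ) (M : ModuleCat.{u} R) : Ideal R where
  carrier := {r | ∀ i, n ≤ i → ∀ N : ModuleCat.{u} R, Module.Finite R N →
    ∀ x : ExtM R i N M, r • x = 0}
  zero_mem' := by intro i _ N _ x; simp
  add_mem' := by
    intro a b ha hb i hi N hN x
    rw [add_smul, ha i hi N hN x, hb i hi N hN x, add_zero]
  smul_mem' := by
    intro c r hr i hi N hN x
    simp only [smul_eq_mul, mul_smul, hr i hi N hN x, smul_zero]

/-- The co-cohomological annihilator `coca_R(M) = ⋃ₙ coca_R^n(M)`. -/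
def coca (M : ModuleCat.{u} R) : Set R := ⋃ n : ℕ, (cocaN R n M : Set R)

/-- `M` has projective dimension at most `n`: `Ext^i(M, -) = 0` for all `i > n`. -/
def projDimLE (n : ℕ) (M : ModuleCat.{u} R) : Prop :=
  ∀ i : ℕ, n < i → ∀ N : ModuleCat.{u} R, Subsingleton (ExtM R i M N)

/-- `M` has injective dimension at most `n`: `Ext^i(-, M) = 0` for all `i > n`. -/
def injDimLE (n : ℕ) (M : ModuleCat.{u} R) : Prop :=
  ∀ i : ℕ, n < i → ∀ N : ModuleCat.{u} R, Subsingleton (ExtM R i N M)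

/-- `K` is an `n`-th syzygy of `M` with respect to resolutions by
finitely generated projective modules. -/
def IsSyz : ℕ → ModuleCat.{u} R → ModuleCat.{u} R → Prop
  | 0, M, K => Nonempty (K ≃ₗ[R] M)
  | n + 1, M, K => ∃ (L P : ModuleCat.{u} R), IsSyz n M L ∧
      Module.Finite R P ∧ Module.Projective R P ∧
      ∃ f : P →ₗ[R] L, Function.Surjective f ∧ Nonempty (K ≃ₗ[R] LinearMap.ker f)

/-- `X` is a direct summand of `Y`. -/
def IsSummand (X Y : ModuleCat.{u} R) : Prop :=
  ∃ (i : X →ₗ[R] Y) (p : Y →ₗ[R] X), p.comp i = LinearMap.id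

/-- `X` is a direct summand of a finite direct sum of copies of `G`. -/
def IsSummandOfCopies (G X : ModuleCat.{u} R) : Prop :=
  ∃ k : ℕ, IsSummand R X (ModuleCat.of R (Fin k → G))

/-- The subcategories `thickⁿ(G)` of `mod R`. -/
def thickN (G : ModuleCat.{u} R) : ℕ → Set (ModuleCat.{u} R)
  | 0 => {X | Subsingleton X}
  | n + 1 => {X | ∃ (Y Y₁ Y₂ : ModuleCat.{u} R) (f : Y₁ →ₗ[R] Y) (g : Y →ₗ[R] Y₂),
      Function.Injective f ∧ Function.Surjective g ∧ LinearMap.ker g = LinearMap.range f ∧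
      ((Y₁ ∈ thickN G n ∧ IsSummandOfCopies R G Y₂) ∨
        (IsSummandOfCopies R G Y₁ ∧ Y₂ ∈ thickN G n)) ∧
      IsSummand R X Y}

/-- The balls `|G|ₙ` of Dao–Takahashi. -/
def ballN (G : ModuleCat.{u} R) : ℕ → Set (ModuleCat.{u} R)
  | 0 => {X | Subsingleton X}
  | n + 1 => {Y | ∃ (Y' Y₁ Y₂ : ModuleCat.{u} R)
      (f : Y₁ →ₗ[R] (ModuleCat.of R (Y × Y'))) (g : (ModuleCat.of R (Y × Y')) →ₗ[R] Y₂),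
      Function.Injective f ∧ Function.Surjective g ∧ LinearMap.ker g = LinearMap.range f ∧
      Y₁ ∈ ballN G n ∧ IsSummandOfCopies R G Y₂}

/-- A regular local ring: a Noetherian local ring whose maximal ideal can be
generated by `dim R` elements. -/
def IsRegularLocal (A : Type u) [CommRing A] [IsLocalRing A] : Prop :=
  IsNoetherianRing A ∧ ∃ s : Finset A, Ideal.span (↑s : Set A) = IsLocalRing.maximalIdeal A ∧
    (s.card : WithBot ℕ∞) = ringKrullDim A

/-- The localization of a module at a prime, as a module category object over the local ring. -/
abbrev locMod (p : PrimeSpectrum R) (M : ModuleCat.{u} R) :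
    ModuleCat.{u} (Localization.AtPrime p.asIdeal) :=
  ModuleCat.of (Localization.AtPrime p.asIdeal) (LocalizedModule p.asIdeal.primeCompl M)

/-- Depth of a module over a local ring, via vanishing of `Ext` from the residue field. -/
def depthE (A : Type u) [CommRing A] [IsLocalRing A] (N : ModuleCat.{u} A) : ℕ∞ :=
  sInf ((fun n : ℕ => (n : ℕ∞)) ''
    {n : ℕ | ¬ Subsingleton (ExtM A n (ModuleCat.of A (IsLocalRing.ResidueField A)) N)})

/-- The large restricted flat dimension of `M`. -/
def rfdE (M : ModuleCat.{u} R) : ℕ∞ :=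
  ⨆ p : PrimeSpectrum R,
    (depthE (Localization.AtPrime p.asIdeal)
        (ModuleCat.of (Localization.AtPrime p.asIdeal) (Localization.AtPrime p.asIdeal)) -
      depthE (Localization.AtPrime p.asIdeal) (locMod R p M))

/-- `r • f` factors through a finitely generated projective module. -/
def FactorsThroughProj (M : ModuleCat.{u} R) (f : M →ₗ[R] M) : Prop :=
  ∃ P : ModuleCat.{u} R, Module.Projective R P ∧ Module.Finite R P ∧
    ∃ (g : M →ₗ[R] P) (h : P →ₗ[R] M), h.comp g = f

/-- The annihilator of the stable endomorphism ring of `M`. -/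
def annStableEnd (M : ModuleCat.{u} R) : Set R :=
  {r | ∀ f : M →ₗ[R] M, FactorsThroughProj R M (r • f)}

/-- A resolving subcategory of `mod R`. -/
def IsResolving (C : Set (ModuleCat.{u} R)) : Prop :=
  (∀ P : ModuleCat.{u} R, Module.Finite R P → Module.Projective R P → P ∈ C) ∧
  (∀ X Y : ModuleCat.{u} R, Y ∈ C → IsSummand R X Y → X ∈ C) ∧
  (∀ (Y Y₁ Y₂ : ModuleCat.{u} R) (f : Y₁ →ₗ[R] Y) (g : Y →ₗ[R] Y₂),
    Function.Injective f → Function.Surjective g → LinearMap.ker g = LinearMap.range f →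
    Y₁ ∈ C → Y₂ ∈ C → Y ∈ C) ∧
  (∀ X ∈ C, ∀ K : ModuleCat.{u} R, IsSyz R 1 X K → K ∈ C)

/-- The smallest resolving subcategory containing `G`. -/
def resCl (G : ModuleCat.{u} R) : Set (ModuleCat.{u} R) :=
  ⋂₀ {C | IsResolving R C ∧ G ∈ C}

end

/-!
Since `m` is nilpotent, `M` has a free cover `F → M` whose kernel `K` lies in `mF`, and `m² = 0`
forces `mK = 0`. Taking such a cover `G → K` of `K` identifies `K` with `G / mG`, and multiplication
by any nonzero `a ∈ m` embeds `G / mG` into `mG = ker (G → K)`, which is semisimple; so `K` is a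
direct summand of its own syzygy (if `m = 0`, then `K = 0`). By dimension shifting,
`ca^(n+1)(K) = ca^1(K)` for all `n`, that is, `ca^(n+2)(M) = ca^2(M)`.
-/

section

universe u v

open IsLocalRing

variable {R : Type u} [CommRing R]

theorem eq_top_of_isNilpotent_of_sup_smul_top_eq_top {M : Type*} [AddCommGroup M] [Module R M]
    {I : Ideal R} (hI : IsNilpotent I) {N : Submodule R M} (hN : N ⊔ I • ⊤ = ⊤) : N = ⊤ := by
  have sup_pow_smul_top (n : ℕ) : N ⊔ I ^ n • ⊤ = ⊤ := by
    induction n with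
    | zero => simp
    | succ n ih =>
      have smul_top_le : I • ⊤ ≤ N ⊔ I ^ (n + 1) • ⊤ :=
        calc I • ⊤ = I • (N ⊔ I ^ n • ⊤) := by rw [ih]
          _ = I • N ⊔ I ^ (n + 1) • ⊤ := by rw [Submodule.smul_sup, pow_succ', Submodule.mul_smul]
          _ ≤ N ⊔ I ^ (n + 1) • ⊤ := sup_le_sup_right Submodule.smul_le_right _
      exact top_le_iff.1 (hN.ge.trans (sup_le le_sup_left smul_top_le))
  obtain ⟨n, hn⟩ := hI
  simpa [hn] using sup_pow_smul_top n

theorem exists_injective_of_ker_eq {P K L : Type*} [AddCommGroup P] [Module R P] [AddCommGroup K]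
    [Module R K] [AddCommGroup L] [Module R L] {f : P →ₗ[R] K} (hf : Function.Surjective f)
    {g : P →ₗ[R] L} (h : g.ker = f.ker) : ∃ i : K →ₗ[R] L, Function.Injective i := by
  have liftQ_injective : Function.Injective (f.ker.liftQ g h.ge) :=
    LinearMap.ker_eq_bot.1 (Submodule.ker_liftQ_eq_bot _ _ _ h.le)
  exact ⟨f.ker.liftQ g h.ge ∘ₗ (f.quotKerEquivOfSurjective hf).symm.toLinearMap,
    liftQ_injective.comp (f.quotKerEquivOfSurjective hf).symm.injective⟩

theorem isSummand_of_injective {X Y : Type u} [AddCommGroup X] [Module R X] [AddCommGroup Y]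
    [Module R Y] [IsSemisimpleModule R Y] {i : X →ₗ[R] Y} (hi : Function.Injective i) :
    IsSummand R (ModuleCat.of R X) (ModuleCat.of R Y) :=
  ⟨i, IsSemisimpleModule.extension_property i hi LinearMap.id⟩

theorem isSummand_of_subsingleton (X Y : ModuleCat.{u} R) [Subsingleton X] : IsSummand R X Y :=
  ⟨0, 0, Subsingleton.elim _ _⟩

section LocalRing

variable [IsLocalRing R] {ι : Type*}

theorem exists_surjective_ker_le_submodule_maximalIdeal (hm : IsNilpotent (maximalIdeal R))
    (M : Type v) [AddCommGroup M] [Module R M] :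
    ∃ (ι : Type v) (f : (ι →₀ R) →ₗ[R] M), Function.Surjective f ∧
      f.ker ≤ Finsupp.submodule fun _ ↦ maximalIdeal R := by
  let : Field (R ⧸ maximalIdeal R) := Ideal.Quotient.field _
  let π := Submodule.mkQ (maximalIdeal R • (⊤ : Submodule R M))
  let b := Module.Basis.ofVectorSpace (R ⧸ maximalIdeal R)
    (M ⧸ maximalIdeal R • (⊤ : Submodule R M))
  let q := (b.repr.restrictScalars R).symm.toLinearMap ∘ₗ
    Finsupp.mapRange.linearMap (Submodule.mkQ (maximalIdeal R))
  have q_surjective : Function.Surjective q :=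
    (b.repr.restrictScalars R).symm.surjective.comp
      (Finsupp.mapRange_surjective _ (map_zero _) (Submodule.mkQ_surjective _))
  have ker_q : q.ker = Finsupp.submodule fun _ ↦ maximalIdeal R := by
    rw [LinearEquiv.ker_comp, Finsupp.ker_mapRange, Submodule.ker_mkQ]
  obtain ⟨f, hf⟩ := Module.projective_lifting_property π q (Submodule.mkQ_surjective _)
  refine ⟨_, f, LinearMap.range_eq_top.1 ?_, ?_⟩
  · apply eq_top_of_isNilpotent_of_sup_smul_top_eq_top hm
    rw [sup_comm, ← Submodule.comap_map_mkQ, ← LinearMap.range_comp, hf,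
      LinearMap.range_eq_top.2 q_surjective, Submodule.comap_top]
  · rw [← ker_q, ← hf]
    exact LinearMap.ker_le_ker_comp f π

theorem isSemisimpleModule_of_isTorsionBySet_maximalIdeal {K : Type*} [AddCommGroup K] [Module R K]
    (hK : Module.IsTorsionBySet R K (maximalIdeal R)) : IsSemisimpleModule R K := by
  let : Field (R ⧸ maximalIdeal R) := Ideal.Quotient.field _
  let := hK.module
  exact hK.isSemisimpleModule_iff.1 inferInstance

theorem mul_eq_zero_iff_mem_maximalIdeal (hm : maximalIdeal R ^ 2 = ⊥) {a : R}
    (ha : a ∈ maximalIdeal R) (ha₀ : a ≠ 0) {x : R} : a * x = 0 ↔ x ∈ maximalIdeal R := by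
  refine ⟨fun hax hx ↦ ha₀ (hx.mul_left_eq_zero.1 hax), fun hx ↦ ?_⟩
  rw [← Submodule.mem_bot R, ← hm, pow_two]
  exact Ideal.mul_mem_mul ha hx

theorem ker_lsmul_finsupp_eq (hm : maximalIdeal R ^ 2 = ⊥) {a : R} (ha : a ∈ maximalIdeal R)
    (ha₀ : a ≠ 0) :
    (LinearMap.lsmul R (ι →₀ R) a).ker = Finsupp.submodule fun _ ↦ maximalIdeal R := by
  ext v
  simp [Finsupp.ext_iff, mul_eq_zero_iff_mem_maximalIdeal hm ha ha₀, Finsupp.mem_submodule_iff]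

theorem isTorsionBySet_maximalIdeal_of_le_submodule (hm : maximalIdeal R ^ 2 = ⊥)
    {K : Submodule R (ι →₀ R)} (hK : K ≤ Finsupp.submodule fun _ ↦ maximalIdeal R) :
    Module.IsTorsionBySet R K (maximalIdeal R) := by
  refine fun x ⟨a, ha⟩ ↦ Subtype.ext ?_
  by_cases ha₀ : a = 0
  · simp [ha₀]
  · exact (ker_lsmul_finsupp_eq hm ha ha₀).ge (hK x.2)

theorem submodule_maximalIdeal_le_ker {K : Type*} [AddCommGroup K] [Module R K]
    (hK : Module.IsTorsionBySet R K (maximalIdeal R)) (f : (ι →₀ R) →ₗ[R] K) :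
    (Finsupp.submodule fun _ ↦ maximalIdeal R) ≤ f.ker := by
  intro v hv
  rw [LinearMap.mem_ker, ← Finsupp.sum_single v, map_finsuppSum]
  refine Finset.sum_eq_zero fun i _ ↦ ?_
  beta_reduce
  rw [← Finsupp.smul_single_one, map_smul]
  exact @hK _ ⟨_, hv i⟩

theorem exists_injective_ker_of_isTorsionBySet_maximalIdeal {K : Type*} [AddCommGroup K]
    [Module R K] (hm : maximalIdeal R ^ 2 = ⊥) (hm₀ : maximalIdeal R ≠ ⊥)
    (hK : Module.IsTorsionBySet R K (maximalIdeal R)) {f : (ι →₀ R) →ₗ[R] K}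
    (hf : Function.Surjective f) (hker : f.ker ≤ Finsupp.submodule fun _ ↦ maximalIdeal R) :
    ∃ i : K →ₗ[R] f.ker, Function.Injective i := by
  obtain ⟨a, ha, ha₀⟩ := Submodule.exists_mem_ne_zero_of_ne_bot hm₀
  have smul_mem_ker (v : ι →₀ R) : LinearMap.lsmul R (ι →₀ R) a v ∈ f.ker := by
    rw [LinearMap.mem_ker, LinearMap.lsmul_apply, map_smul]
    exact @hK _ ⟨a, ha⟩
  apply exists_injective_of_ker_eq hf (L := f.ker)
    (g := (LinearMap.lsmul R (ι →₀ R) a).codRestrict f.ker smul_mem_ker)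
  rw [LinearMap.ker_codRestrict, ker_lsmul_finsupp_eq hm ha ha₀]
  exact (submodule_maximalIdeal_le_ker hK f).antisymm hker

theorem isSummand_ker_of_isTorsionBySet_maximalIdeal {K : Type u} [AddCommGroup K] [Module R K]
    (hm : maximalIdeal R ^ 2 = ⊥) (hm₀ : maximalIdeal R ≠ ⊥)
    (hK : Module.IsTorsionBySet R K (maximalIdeal R)) {ι : Type u} {f : (ι →₀ R) →ₗ[R] K}
    (hf : Function.Surjective f)
    (hker : f.ker ≤ Finsupp.submodule fun _ ↦ maximalIdeal R) :
    IsSummand R (ModuleCat.of R K) (ModuleCat.of R f.ker) := by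
  obtain ⟨i, hi⟩ := exists_injective_ker_of_isTorsionBySet_maximalIdeal hm hm₀ hK hf hker
  have := isSemisimpleModule_of_isTorsionBySet_maximalIdeal (K := f.ker)
    (isTorsionBySet_maximalIdeal_of_le_submodule hm hker)
  exact isSummand_of_injective (Y := f.ker) hi

theorem exists_surjective_isSummand_ker_of_le_submodule (hm : maximalIdeal R ^ 2 = ⊥)
    {ι : Type u} {K : Submodule R (ι →₀ R)}
    (hK : K ≤ Finsupp.submodule fun _ ↦ maximalIdeal R) :
    ∃ (κ : Type u) (g : (κ →₀ R) →ₗ[R] K), Function.Surjective g ∧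
      IsSummand R (ModuleCat.of R K) (ModuleCat.of R g.ker) := by
  obtain ⟨κ, g, hg, hker⟩ := exists_surjective_ker_le_submodule_maximalIdeal ⟨2, hm⟩ K
  refine ⟨κ, g, hg, ?_⟩
  by_cases hm₀ : maximalIdeal R = ⊥
  · have K_eq_bot : K = ⊥ := eq_bot_iff.2 fun v hv ↦ Finsupp.ext fun i ↦ by
      simpa [hm₀] using hK hv i
    have : Subsingleton K := Submodule.subsingleton_iff_eq_bot.2 K_eq_bot
    exact isSummand_of_subsingleton (ModuleCat.of R K) _
  · exact isSummand_ker_of_isTorsionBySet_maximalIdeal (K := K) hm hm₀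
      (isTorsionBySet_maximalIdeal_of_le_submodule hm hK) hg hker

end LocalRing

theorem mem_annihilator_homology_iff (S : ShortComplex (ModuleCat.{u} R)) (r : R) :
    r ∈ Module.annihilator R S.homology ↔ ∀ y, S.g y = 0 → ∃ z, S.f z = r • y := by
  have annihilator_eq : Module.annihilator R S.homology =
      Module.annihilator R (S.g.hom.ker ⧸ S.moduleCatToCycles.range) :=
    S.moduleCatHomologyIso.toLinearEquiv.annihilator_eq
  rw [annihilator_eq, Module.mem_annihilator]
  simp only [(Submodule.mkQ_surjective _).forall, Submodule.mkQ_apply,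
    ← Submodule.Quotient.mk_smul, Submodule.Quotient.mk_eq_zero, LinearMap.mem_range,
    Subtype.ext_iff, SetLike.val_smul, Subtype.forall, LinearMap.mem_ker]
  rfl

theorem mem_annihilator_extM_succ_iff {M : ModuleCat.{u} R} (P : ProjectiveResolution M)
    (N : ModuleCat.{u} R) (n : ℕ) (r : R) :
    r ∈ Module.annihilator R (ExtM R (n + 1) M N) ↔
      ∀ f : P.complex.X (n + 1) ⟶ N, P.complex.d (n + 2) (n + 1) ≫ f = 0 →
        ∃ g : P.complex.X n ⟶ N, P.complex.d (n + 1) n ≫ g = r • f := by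
  let C := P.complex.linearYonedaObj R N
  let e : ExtM R (n + 1) M N ≅ (C.sc' n (n + 1) (n + 2)).homology :=
    P.isoExt (n + 1) N ≪≫
      ShortComplex.homologyMapIso (C.isoSc' n (n + 1) (n + 2) (by simp) (by simp))
  rw [e.toLinearEquiv.annihilator_eq, mem_annihilator_homology_iff]
  rfl

theorem mem_annihilator_ext_succ_iff {M : ModuleCat.{u} R} (P : ProjectiveResolution M)
    (N : ModuleCat.{u} R) (n : ℕ) (r : R) :
    r ∈ Module.annihilator R (Abelian.Ext M N (n + 1)) ↔
      ∀ f : P.complex.X (n + 1) ⟶ N, P.complex.d (n + 2) (n + 1) ≫ f = 0 →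
        ∃ g : P.complex.X n ⟶ N, P.complex.d (n + 1) n ≫ g = r • f := by
  have smul_extMk_eq_zero_iff (f : P.complex.X (n + 1) ⟶ N)
      (hf : P.complex.d (n + 2) (n + 1) ≫ f = 0) :
      r • P.extMk f (n + 2) rfl hf = 0 ↔
        ∃ g : P.complex.X n ⟶ N, P.complex.d (n + 1) n ≫ g = r • f := by
    rw [Abelian.Ext.smul_eq_comp_mk₀, P.extMk_comp_mk₀, P.extMk_eq_zero_iff _ _ _ _ n rfl,
      Linear.comp_smul, Category.comp_id]
  rw [Module.mem_annihilator]
  refine ⟨fun h f hf ↦ (smul_extMk_eq_zero_iff f hf).1 (h _), fun h x ↦ ?_⟩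
  obtain ⟨f, hf, rfl⟩ := P.extMk_surjective x (n + 2) rfl
  exact (smul_extMk_eq_zero_iff f hf).2 (h f hf)

theorem annihilator_extM_succ_eq (M N : ModuleCat.{u} R) (n : ℕ) :
    Module.annihilator R (ExtM R (n + 1) M N) =
      Module.annihilator R (Abelian.Ext M N (n + 1)) := by
  ext r
  rw [mem_annihilator_extM_succ_iff (ProjectiveResolution.of M),
    mem_annihilator_ext_succ_iff (ProjectiveResolution.of M)]

theorem annihilator_ext_le_of_isSummand {X Y : ModuleCat.{u} R} (h : IsSummand R X Y)
    (N : ModuleCat.{u} R) (n : ℕ) :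
    Module.annihilator R (Abelian.Ext Y N n) ≤ Module.annihilator R (Abelian.Ext X N n) := by
  obtain ⟨i, p, hpi⟩ := h
  have ofHom_comp : ModuleCat.ofHom i ≫ ModuleCat.ofHom p = 𝟙 X := by
    rw [← ModuleCat.ofHom_comp, hpi]
    rfl
  apply LinearMap.annihilator_le_of_surjective
    ((Abelian.Ext.mk₀ (ModuleCat.ofHom i)).precompOfLinear R N (zero_add n))
  exact fun x ↦ ⟨(Abelian.Ext.mk₀ (ModuleCat.ofHom p)).comp x (zero_add n), by simp [ofHom_comp]⟩

theorem annihilator_ext_succ_eq_of_shortExact {S : ShortComplex (ModuleCat.{u} R)}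
    (hS : S.ShortExact) [Projective S.X₂] (N : ModuleCat.{u} R) (n : ℕ) :
    Module.annihilator R (Abelian.Ext S.X₃ N (n + 2)) =
      Module.annihilator R (Abelian.Ext S.X₁ N (n + 1)) := by
  let δ := hS.extClass.precompOfLinear R N (add_comm 1 (n + 1))
  have δ_injective : Function.Injective δ := by
    refine (injective_iff_map_eq_zero δ).2 fun x hx ↦ ?_
    obtain ⟨y, rfl⟩ := Abelian.Ext.contravariant_sequence_exact₁ hS N x (add_comm 1 (n + 1)) hx
    rw [y.eq_zero_of_projective, Abelian.Ext.comp_zero]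
  have δ_surjective : Function.Surjective δ :=
    precomp_extClass_surjective_of_projective_X₂ N hS (n + 1)
  exact (LinearEquiv.ofBijective δ ⟨δ_injective, δ_surjective⟩).annihilator_eq.symm

theorem forall_succ_le_iff {p : ℕ → Prop} {n : ℕ} :
    (∀ i, n + 1 ≤ i → p i) ↔ ∀ i, n ≤ i → p (i + 1) := by
  refine ⟨fun h i hi ↦ h (i + 1) (Nat.succ_le_succ hi), fun h i hi ↦ ?_⟩
  obtain ⟨j, rfl⟩ := Nat.exists_eq_add_of_le' (Nat.le_of_add_left_le hi)
  exact h j (Nat.le_of_succ_le_succ hi)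

theorem mem_caN_succ_iff {M : ModuleCat.{u} R} {n : ℕ} {r : R} :
    r ∈ caN R (n + 1) M ↔ ∀ i, n ≤ i → ∀ N : ModuleCat.{u} R, Module.Finite R N →
      r ∈ Module.annihilator R (Abelian.Ext M N (i + 1)) := by
  simp only [← annihilator_extM_succ_eq, Module.mem_annihilator]
  exact forall_succ_le_iff

theorem caN_mono (M : ModuleCat.{u} R) : Monotone fun n ↦ caN R n M :=
  fun _ _ hmn _ hr i hi ↦ hr i (hmn.trans hi)

theorem caN_succ_le_of_isSummand {X Y : ModuleCat.{u} R} (h : IsSummand R X Y) (n : ℕ) :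
    caN R (n + 1) Y ≤ caN R (n + 1) X := fun _ hr ↦
  mem_caN_succ_iff.2 fun i hi N hN ↦
    annihilator_ext_le_of_isSummand h N _ (mem_caN_succ_iff.1 hr i hi N hN)

theorem caN_add_two_eq_caN_succ_ker {P M : Type u} [AddCommGroup P] [Module R P]
    [Module.Projective R P] [AddCommGroup M] [Module R M] {f : P →ₗ[R] M}
    (hf : Function.Surjective f) (n : ℕ) :
    caN R (n + 2) (ModuleCat.of R M) = caN R (n + 1) (ModuleCat.of R f.ker) := by
  have : Projective f.shortComplexKer.X₂ := (IsProjective.iff_projective P).1 inferInstance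
  have annihilator_eq (N : ModuleCat.{u} R) (i : ℕ) :
      Module.annihilator R (Abelian.Ext (ModuleCat.of R M) N (i + 2)) =
        Module.annihilator R (Abelian.Ext (ModuleCat.of R f.ker) N (i + 1)) :=
    annihilator_ext_succ_eq_of_shortExact (LinearMap.shortExact_shortComplexKer hf) N i
  ext r
  simp only [mem_caN_succ_iff, ← annihilator_eq]
  exact forall_succ_le_iff

theorem caN_succ_eq_of_isSummand_ker {P K : Type u} [AddCommGroup P] [Module R P]
    [Module.Projective R P] [AddCommGroup K] [Module R K] {f : P →ₗ[R] K}
    (hf : Function.Surjective f)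
    (h : IsSummand R (ModuleCat.of R K) (ModuleCat.of R f.ker)) (n : ℕ) :
    caN R (n + 1) (ModuleCat.of R K) = caN R 1 (ModuleCat.of R K) := by
  induction n with
  | zero => rfl
  | succ n ih =>
    refine le_antisymm ?_ (caN_mono _ (Nat.le_add_left 1 _))
    rw [← ih, caN_add_two_eq_caN_succ_ker hf]
    exact caN_succ_le_of_isSummand h n

theorem stmt11_general (R : Type u) [CommRing R] [IsLocalRing R] (hm : maximalIdeal R ^ 2 = ⊥)
    (M : ModuleCat.{u} R) : (caN R 2 M : Set R) = ca R M := by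
  have nilpotent : IsNilpotent (maximalIdeal R) := ⟨2, hm⟩
  obtain ⟨ι, f, hf, hker⟩ := exists_surjective_ker_le_submodule_maximalIdeal nilpotent M
  obtain ⟨κ, g, hg, hsummand⟩ := exists_surjective_isSummand_ker_of_le_submodule hm hker
  have caN_eq (n : ℕ) : caN R (n + 2) M = caN R 2 M :=
    calc caN R (n + 2) M = caN R (n + 1) (ModuleCat.of R f.ker) := caN_add_two_eq_caN_succ_ker hf n
      _ = caN R 1 (ModuleCat.of R f.ker) := caN_succ_eq_of_isSummand_ker hg hsummand n
      _ = caN R 2 M := (caN_add_two_eq_caN_succ_ker hf 0).symm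
  refine (Set.subset_iUnion (fun n ↦ (caN R n M : Set R)) 2).antisymm (Set.iUnion_subset fun n ↦ ?_)
  rw [← caN_eq n]
  exact caN_mono M (Nat.le_add_right n 2)

end

/-- over a Noetherian local ring with `m² = 0`,
`ca_R²(M) = ca_R(M)` for every finitely generated `M`. -/
theorem stmt11 (R : Type u) [CommRing R] [IsNoetherianRing R] [IsLocalRing R]
    (hm : (IsLocalRing.maximalIdeal R) ^ 2 = ⊥)
    (M : ModuleCat.{u} R) [Module.Finite R M] :
    (caN R 2 M : Set R) = ca R M :=
  stmt11_general R hm M
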